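/- arXiv:1911.07546 — 2 statements merged into one kernel-verified Lean document; each statement's English description precedes it below -/
import Mathlib

section
/- Let A be a positive semidefinite self-adjoint linear operator on a finite-dimensional complex inner product space H, let c > 0 be such that every nonzero eigenvalue of A is at least c, and let ψ ∈ H be a unit vector with ⟪ψ, A ψ⟫ ≤ δ, where 0 ≤ δ < c. Then there exists a unit vector ψ'' in the kernel of A such that ‖ψ − ψ''‖² ≤ 2 δ / c. -/
/-!
Split `ψ = φ + χ` with `φ` the orthogonal projection of `ψ` onto `ker A`. As `A` is symmetric and
kills `φ`, the vectors `ψ` and `χ` have the same energy, and the spectral gap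
(`gap_le_energy_of_mem_ker_orthogonal`) gives `c ‖χ‖² ≤ δ < c`. Hence `‖φ‖² = 1 - ‖χ‖² > 0`, so
`ψ'' = φ / ‖φ‖` makes sense, and since `0 ≤ ‖φ‖ ≤ 1`,
`‖ψ - ψ''‖² = 2 - 2 ‖φ‖ ≤ 2 - 2 ‖φ‖² = 2 ‖χ‖² ≤ 2 δ / c`.
-/

open scoped ComplexInnerProductSpace

/-- The spectral gap as a bound on the quadratic form: on `(ker A)ᗮ` the energy is at least
`c ‖χ‖²`, because only eigenvectors with nonzero eigenvalue occur in the expansion of `χ` in an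
orthonormal eigenbasis. -/
theorem gap_le_energy_of_mem_ker_orthogonal
    {H : Type*} [NormedAddCommGroup H] [InnerProductSpace ℂ H] [FiniteDimensional ℂ H]
    (A : H →ₗ[ℂ] H) (hsa : A.IsSymmetric) (c : ℝ)
    (heig : ∀ μ : ℝ, Module.End.HasEigenvalue A (μ : ℂ) → μ ≠ 0 → c ≤ μ)
    (χ : H) (hχ : χ ∈ (LinearMap.ker A)ᗮ) :
    c * ‖χ‖ ^ 2 ≤ (⟪χ, A χ⟫).re := by
  set b := hsa.eigenvectorBasis rfl
  set ev := hsa.eigenvalues rfl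
  have happ : ∀ i, A (b i) = (ev i : ℂ) • b i := hsa.apply_eigenvectorBasis rfl
  have henergy : (⟪χ, A χ⟫).re = ∑ i, ev i * ‖⟪b i, χ⟫‖ ^ 2 := by
    rw [← b.sum_inner_mul_inner χ (A χ), Complex.re_sum]
    refine Finset.sum_congr rfl fun i _ => ?_
    rw [← hsa (b i) χ, happ, inner_smul_left, Complex.conj_ofReal, mul_left_comm,
      Complex.re_ofReal_mul, ← inner_conj_symm χ (b i), Complex.conj_mul']
    norm_cast
  rw [henergy, ← b.sum_sq_norm_inner_right χ, Finset.mul_sum]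
  refine Finset.sum_le_sum fun i _ => ?_
  by_cases h0 : ev i = 0
  · have hker : b i ∈ LinearMap.ker A := by simp [happ, h0]
    simp [Submodule.inner_right_of_mem_orthogonal hker hχ]
  · exact mul_le_mul_of_nonneg_right
      (heig _ (hsa.hasEigenvalue_eigenvalues rfl i) h0) (sq_nonneg _)

/-- A state of energy at most `δ` with respect to a positive semidefinite operator whose
nonzero eigenvalues are at least `c > δ` is within squared distance `2δ/c` of an exact
normalized ground state (a unit vector in the kernel). -/
theorem close_to_ground_state_of_low_energy
    {H : Type*} [NormedAddCommGroup H] [InnerProductSpace ℂ H] [FiniteDimensional ℂ H]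
    (A : H →ₗ[ℂ] H) (hsa : A.IsSymmetric)
    (hpos : ∀ x : H, 0 ≤ (⟪x, A x⟫).re)
    (c : ℝ) (hc : 0 < c)
    (heig : ∀ μ : ℝ, Module.End.HasEigenvalue A (μ : ℂ) → μ ≠ 0 → c ≤ μ)
    (ψ : H) (hψ : ‖ψ‖ = 1) (δ : ℝ) (hδ : 0 ≤ δ) (hδc : δ < c)
    (hE : (⟪ψ, A ψ⟫).re ≤ δ) :
    ∃ ψ'' : H, ψ'' ∈ LinearMap.ker A ∧ ‖ψ''‖ = 1 ∧ ‖ψ - ψ''‖ ^ 2 ≤ 2 * δ / c := by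
  set φ : H := (LinearMap.ker A).starProjection ψ with hφ
  set χ : H := ψ - φ with hχ
  have hφker : φ ∈ LinearMap.ker A := Submodule.starProjection_apply_mem _ _
  have hχperp : χ ∈ (LinearMap.ker A)ᗮ := Submodule.sub_starProjection_mem_orthogonal _
  have hφχ : ⟪φ, χ⟫ = 0 := Submodule.inner_right_of_mem_orthogonal hφker hχperp
  have hψφχ : ψ = φ + χ := by simp [hχ]
  have hAφ : A φ = 0 := hφker
  have henergy : ⟪χ, A χ⟫ = ⟪ψ, A ψ⟫ := by
    have hAχ : A χ = A ψ := by simp [hχ, hAφ]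
    rw [hAχ, hχ, inner_sub_left, ← hsa φ ψ, hAφ, inner_zero_left, sub_zero]
  have hgap : c * ‖χ‖ ^ 2 ≤ δ := by
    have h := gap_le_energy_of_mem_ker_orthogonal A hsa c heig χ hχperp
    rw [henergy] at h
    exact h.trans hE
  have hpyth : 1 = ‖φ‖ ^ 2 + ‖χ‖ ^ 2 := by
    have h := norm_add_sq_eq_norm_sq_add_norm_sq_of_inner_eq_zero φ χ hφχ
    rw [← hψφχ, hψ] at h
    linarith
  have hφpos : 0 < ‖φ‖ := by
    refine (norm_nonneg φ).lt_of_ne' fun h0 => ?_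
    have h1 : ‖χ‖ ^ 2 = 1 := by rw [h0] at hpyth; linarith
    rw [h1] at hgap
    linarith
  have hφle : ‖φ‖ ≤ 1 := by nlinarith [sq_nonneg ‖χ‖]
  have hunit : ‖((‖φ‖⁻¹ : ℝ) : ℂ) • φ‖ = 1 := by
    rw [norm_smul, Complex.norm_real, norm_inv, norm_norm, inv_mul_cancel₀ hφpos.ne']
  refine ⟨((‖φ‖⁻¹ : ℝ) : ℂ) • φ, Submodule.smul_mem _ _ hφker, hunit, ?_⟩
  have hoverlap : (⟪ψ, ((‖φ‖⁻¹ : ℝ) : ℂ) • φ⟫).re = ‖φ‖ := by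
    have hψφ : ⟪ψ, φ⟫ = ((‖φ‖ ^ 2 : ℝ) : ℂ) := by
      rw [hψφχ, inner_add_left, inner_eq_zero_symm.mp hφχ, add_zero,
        inner_self_eq_norm_sq_to_K]
      norm_cast
    rw [inner_smul_right, hψφ, ← Complex.ofReal_mul, Complex.ofReal_re]
    field_simp
  have hdist : ‖ψ - ((‖φ‖⁻¹ : ℝ) : ℂ) • φ‖ ^ 2 = 2 - 2 * ‖φ‖ := by
    have h := norm_sub_sq (𝕜 := ℂ) ψ (((‖φ‖⁻¹ : ℝ) : ℂ) • φ)
    rw [hψ, hunit, RCLike.re_to_complex, hoverlap] at h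
    linarith
  rw [hdist, le_div_iff₀ hc]
  have hle : 2 - 2 * ‖φ‖ ≤ 2 * ‖χ‖ ^ 2 := by nlinarith
  nlinarith
end

section
/- Fix n ≥ 1. For a, b ∈ (Fin n → ZMod 2), let W(a,b) be the n-qubit Pauli matrix. Then for every complex matrix M with rows and columns indexed by Fin n → ZMod 2, (1 / 2^(2n)) • ∑ over all a, b ∈ (Fin n → ZMod 2) of W(a,b) * M * (W(a,b))ᴴ = ((trace M) / 2^n) • 1, where 1 is the identity matrix. -/
/-!
The twirl is computed entrywise. Conjugation by `W(a,b)` sends `M` to the matrix whose `(u,v)`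
entry is `(-1)^(b·x) (-1)^(b·y) M x y`, where `x = u - a` and `y = v - a`
(`PauliW_conj_apply`). Summing over `b` kills every term with `x ≠ y`, by orthogonality of the
characters of `(ZMod 2)^n` (`sum_sign_mul_sign`); hence only `u = v` survives, with weight `2^n`.
The remaining sum over `a` of `M (u - a) (u - a)` is the trace.
-/

open Matrix

/-- The `n`-qubit Pauli matrix `W(a,b) = X^a Z^b`, a matrix indexed by `n`-bit strings,
with `(u,v)` entry `(-1)^(b·v)` if `u = v + a` and `0` otherwise. -/
def PauliW (n : ℕ) (a b : Fin n → ZMod 2) :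
    Matrix (Fin n → ZMod 2) (Fin n → ZMod 2) ℂ :=
  Matrix.of fun u v => if u = v + a then (-1 : ℂ) ^ (∑ i, (b i * v i).val) else 0

/-- Orthogonality of the characters `b ↦ (-1)^(b·x)` of `(ZMod 2)^n`: the sum over `b` factors
into one sum over `ZMod 2` per coordinate. -/
lemma sum_sign_mul_sign (n : ℕ) (x y : Fin n → ZMod 2) :
    ∑ b : Fin n → ZMod 2,
        (-1 : ℂ) ^ (∑ i, (b i * x i).val) * (-1 : ℂ) ^ (∑ i, (b i * y i).val) =
      if x = y then 2 ^ n else 0 := by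
  have hbit : ∀ s t : ZMod 2,
      ∑ c : ZMod 2, (-1 : ℂ) ^ (c * s).val * (-1 : ℂ) ^ (c * t).val =
        if s = t then 2 else 0 := by
    intro s t
    have hcases : ∀ r : ZMod 2, r = 0 ∨ r = 1 := by decide
    rw [show (Finset.univ : Finset (ZMod 2)) = {0, 1} from rfl,
      Finset.sum_pair (zero_ne_one' (ZMod 2))]
    rcases hcases s with rfl | rfl <;> rcases hcases t with rfl | rfl <;>
      norm_num [ZMod.val_one]
  simp_rw [← Finset.prod_pow_eq_pow_sum, ← Finset.prod_mul_distrib]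
  rw [← Fintype.prod_sum
    (fun (i : Fin n) (c : ZMod 2) => (-1 : ℂ) ^ (c * x i).val * (-1 : ℂ) ^ (c * y i).val)]
  simp_rw [hbit]
  split_ifs with h
  · simp [h]
  · obtain ⟨i, hi⟩ := Function.ne_iff.mp h
    exact Finset.prod_eq_zero (Finset.mem_univ i) (by simp [hi])

lemma PauliW_conj_apply (n : ℕ) (a b : Fin n → ZMod 2)
    (M : Matrix (Fin n → ZMod 2) (Fin n → ZMod 2) ℂ) (u v : Fin n → ZMod 2) :
    (PauliW n a b * M * (PauliW n a b)ᴴ) u v =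
      (-1 : ℂ) ^ (∑ i, (b i * (u - a) i).val) * (-1 : ℂ) ^ (∑ i, (b i * (v - a) i).val) *
        M (u - a) (v - a) := by
  simp only [Matrix.mul_apply, PauliW, Matrix.conjTranspose_apply, Matrix.of_apply,
    ← sub_eq_iff_eq_add, apply_ite (star : ℂ → ℂ), star_zero, ite_mul, mul_ite, zero_mul,
    mul_zero, Finset.sum_ite_eq, Finset.mem_univ, if_true, star_pow, star_neg, star_one]
  ring

/-- The Pauli twirl identity: averaging the conjugation of any matrix `M` by all
`2^(2n)` Pauli matrices yields `(tr M / 2^n) • 1`. -/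
theorem pauli_twirl (n : ℕ) (hn : 1 ≤ n)
    (M : Matrix (Fin n → ZMod 2) (Fin n → ZMod 2) ℂ) :
    ((1 : ℂ) / 2 ^ (2 * n)) •
        ∑ a : Fin n → ZMod 2, ∑ b : Fin n → ZMod 2,
          PauliW n a b * M * (PauliW n a b)ᴴ =
      (Matrix.trace M / 2 ^ n) • (1 : Matrix (Fin n → ZMod 2) (Fin n → ZMod 2) ℂ) := by
  ext u v
  simp only [Matrix.smul_apply, Matrix.sum_apply, PauliW_conj_apply, ← Finset.sum_mul,
    sum_sign_mul_sign, sub_left_inj, smul_eq_mul, Matrix.one_apply]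
  split_ifs with h
  · subst h
    have htrace : ∑ a, M (u - a) (u - a) = M.trace :=
      (Equiv.subLeft u).sum_comp fun x => M x x
    rw [← Finset.mul_sum, htrace]
    field_simp
    ring
  · simp
end
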